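/- arXiv:2505.08472 — 2 statements merged into one kernel-verified Lean document; each statement's English description precedes it below -/
import Mathlib

section
/- Let ∑_{j≥0} a_j be a formal pseudoanalytic amplitude of order m with constants M_a, C_a, R_a. Let (φ_j) be Ehrenpreis cut-offs in η vanishing for |η| ≤ jρ and equal to 1 for |η| ≥ 2jρ, where ρ > 2R_a and ρ > e·C_a. Then a := a₀ + ∑_{j≥1} φ_j(η/(jρ)) a_j is a pseudoanalytic amplitude of order m, equals a₀ for |η| < ρ, and is a finite realization of ∑ a_j, i.e., |a − ∑_{j ≤ |η|/R} a_j| ≤ C e^{−C^{−1}|η|} for R > ρ. -/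
open Nat

variable {n : ℕ}

/-- Partial derivative in the `η`-variable in direction `eᵢ`. -/
noncomputable def pderivEta {F : Type*} [NormedAddCommGroup F] [NormedSpace ℝ F]
    (i : Fin n) (f : (Fin n → ℝ) → F) : (Fin n → ℝ) → F :=
  fun η => fderiv ℝ f η (Pi.single i 1)

/-- Iterated `η`-derivative along a list of coordinate directions. -/
noncomputable def pderivEtas {F : Type*} [NormedAddCommGroup F] [NormedSpace ℝ F] :
    List (Fin n) → ((Fin n → ℝ) → F) → ((Fin n → ℝ) → F)
  | [], f => f
  | i :: l, f => pderivEta i (pderivEtas l f)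

/-!
The point is that `j ! ≤ j ^ j` turns the bound `C ^ j * j ! * ‖η‖ ^ (-j)` on the `j`-th term of the
formal amplitude into `e ^ (-δ j)` as soon as `j ρ ≤ ‖η‖`, where `ρ = C * e ^ δ`; this is where
`φ_j` lives. The terms cut off by `φ_j` are therefore summable uniformly in `η`. Derivatives falling
on `φ_j` matter only when `‖η‖ ≤ 2 j ρ`, and there the loss of a power `‖η‖ ^ k` against the
amplitude estimate is absorbed by `k ! * e ^ (δ j / 2)`. Finally, the `j`-th coefficient of
`a - ∑_{j ≤ ‖η‖ / r} a_j` vanishes unless `j` is comparable to `‖η‖`, and for such `j` the factor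
`e ^ (-δ j)` is exponentially small in `‖η‖`.
-/

open scoped Topology

section Calculus

variable {F : Type*} [NormedAddCommGroup F] [NormedSpace ℝ F]

theorem pderivEtas_congr_of_eventuallyEq (l : List (Fin n)) {f g : (Fin n → ℝ) → F}
    {η : Fin n → ℝ} (h : f =ᶠ[𝓝 η] g) : pderivEtas l f =ᶠ[𝓝 η] pderivEtas l g := by
  induction l with
  | nil => exact h
  | cons i l ih =>
    filter_upwards [ih.fderiv (𝕜 := ℝ)] with x hx
    simp only [pderivEtas, pderivEta, hx]

theorem pderivEtas_zero (l : List (Fin n)) :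
    pderivEtas l (fun _ => (0 : F)) = fun _ => 0 := by
  induction l with
  | nil => rfl
  | cons i l ih => funext x; simp [pderivEtas, pderivEta, ih]

theorem contDiffAt_pderivEtas {f : (Fin n → ℝ) → F} {η : Fin n → ℝ} (l : List (Fin n)) {k : ℕ}
    (hf : ContDiffAt ℝ (k + l.length : ℕ) f η) : ContDiffAt ℝ k (pderivEtas l f) η := by
  induction l generalizing k with
  | nil => exact hf
  | cons i l ih =>
    have hl : ContDiffAt ℝ (k + 1 : ℕ) (pderivEtas l f) η :=
      ih (by rwa [Nat.add_right_comm, Nat.add_assoc])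
    exact (hl.fderiv_right (m := k) (by norm_cast)).clm_apply contDiffAt_const

theorem differentiableAt_pderivEtas {f : (Fin n → ℝ) → F} {η : Fin n → ℝ} {l : List (Fin n)}
    {k : ℕ} (hl : l.length < k) (hf : ContDiffAt ℝ k f η) :
    DifferentiableAt ℝ (pderivEtas l f) η :=
  (contDiffAt_pderivEtas l (k := 1) (hf.of_le (by exact_mod_cast (by omega)))).differentiableAt
    (by norm_num)

theorem pderivEtas_sum {ι : Type*} (s : Finset ι) {f : ι → (Fin n → ℝ) → F} {η : Fin n → ℝ}
    (l : List (Fin n)) (hf : ∀ j ∈ s, ContDiffAt ℝ l.length (f j) η) :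
    pderivEtas l (fun x => ∑ j ∈ s, f j x) η = ∑ j ∈ s, pderivEtas l (f j) η := by
  induction l generalizing η with
  | nil => rfl
  | cons i l ih =>
    have heq : pderivEtas l (fun x => ∑ j ∈ s, f j x) =ᶠ[𝓝 η]
        fun x => ∑ j ∈ s, pderivEtas l (f j) x := by
      filter_upwards [(Finset.eventually_all s).2 fun j hj => (hf j hj).eventually (by simp)]
        with x hx
      exact ih fun j hj => (hx j hj).of_le (by simp)
    simp only [pderivEtas, pderivEta, heq.fderiv_eq]
    rw [fderiv_fun_sum fun j hj => differentiableAt_pderivEtas (by simp) (hf j hj)]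
    simp

theorem hasFDerivAt_list_sum {β E : Type*} [NormedAddCommGroup E] [NormedSpace ℝ E] (L : List β)
    {f : β → E → F} {f' : β → E →L[ℝ] F} {x : E} (hf : ∀ b ∈ L, HasFDerivAt (f b) (f' b) x) :
    HasFDerivAt (fun y => (L.map fun b => f b y).sum) (L.map f').sum x := by
  induction L with
  | nil => simpa using hasFDerivAt_const (0 : F) x
  | cons b L ih =>
    simp only [List.map_cons, List.sum_cons]
    exact (hf b List.mem_cons_self).add (ih fun c hc => hf c (List.mem_cons_of_mem b hc))

/-- All ways of distributing the entries of a list over an ordered pair of lists, listed with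
multiplicity; they index the terms of the Leibniz rule for `pderivEtas`. -/
def splittings {β : Type*} : List β → List (List β × List β)
  | [] => [([], [])]
  | i :: l => (splittings l).map (fun p => (i :: p.1, p.2)) ++
      (splittings l).map fun p => (p.1, i :: p.2)

theorem append_perm_of_mem_splittings {β : Type*} {l : List β} {p : List β × List β}
    (hp : p ∈ splittings l) : (p.1 ++ p.2).Perm l := by
  induction l generalizing p with
  | nil => simp_all [splittings]
  | cons i l ih =>
    simp only [splittings, List.mem_append, List.mem_map] at hp
    rcases hp with ⟨q, hq, rfl⟩ | ⟨q, hq, rfl⟩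
    · exact (ih hq).cons i
    · exact List.perm_middle.trans ((ih hq).cons i)

theorem sum_splittings_pow_mul_pow {β S : Type*} [CommSemiring S] (l : List β) (x y : S) :
    ((splittings l).map fun p => x ^ p.1.length * y ^ p.2.length).sum = (x + y) ^ l.length := by
  induction l with
  | nil => simp [splittings]
  | cons i l ih =>
    simp only [splittings, List.map_append, List.map_map, List.sum_append, Function.comp_def,
      List.length_cons, _root_.pow_succ', mul_left_comm _ y, mul_assoc x, List.sum_map_mul_left,
      ih, add_mul]

theorem pderivEtas_smul (l : List (Fin n)) {f : (Fin n → ℝ) → ℝ} {g : (Fin n → ℝ) → F}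
    {η : Fin n → ℝ} (hf : ContDiffAt ℝ l.length f η) (hg : ContDiffAt ℝ l.length g η) :
    pderivEtas l (fun x => f x • g x) η =
      ((splittings l).map fun p => pderivEtas p.1 f η • pderivEtas p.2 g η).sum := by
  induction l generalizing η with
  | nil => simp [splittings, pderivEtas]
  | cons i l ih =>
    have heq : pderivEtas l (fun x => f x • g x) =ᶠ[𝓝 η]
        fun x => ((splittings l).map fun p => pderivEtas p.1 f x • pderivEtas p.2 g x).sum := by
      filter_upwards [hf.eventually (by simp), hg.eventually (by simp)] with x hfx hgx
      exact ih (hfx.of_le (by simp)) (hgx.of_le (by simp))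
    have hsum := hasFDerivAt_list_sum (splittings l)
      (f := fun p x => pderivEtas p.1 f x • pderivEtas p.2 g x) (x := η) fun p hp => by
        have hlen := (append_perm_of_mem_splittings hp).length_eq
        rw [List.length_append] at hlen
        exact (differentiableAt_pderivEtas (by simp; omega) hf).hasFDerivAt.smul
          (differentiableAt_pderivEtas (by simp; omega) hg).hasFDerivAt
    have happly (L : List ((Fin n → ℝ) →L[ℝ] F)) (v : Fin n → ℝ) :
        L.sum v = (L.map fun T => T v).sum :=
      map_list_sum (ContinuousLinearMap.apply ℝ F v) L
    simp only [pderivEtas, pderivEta, heq.fderiv_eq, hsum.fderiv, happly]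
    simp only [splittings, List.map_append, List.map_map, List.sum_append, ← List.sum_map_add]
    refine congrArg List.sum (List.map_congr_left fun p _ => ?_)
    simp [pderivEtas, pderivEta, add_comm]

end Calculus

section Estimates

/-- `γ!` for the multi-index `γ` counting how often each coordinate occurs in `l`; real-valued,
since it only enters estimates. -/
noncomputable def multiIndexFactorial (l : List (Fin n)) : ℝ :=
  ∏ i : Fin n, ((l.count i)! : ℝ)

theorem multiIndexFactorial_pos (l : List (Fin n)) : 0 < multiIndexFactorial l :=
  Finset.prod_pos fun _ _ => by positivity

theorem multiIndexFactorial_nil : multiIndexFactorial ([] : List (Fin n)) = 1 := by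
  simp [multiIndexFactorial]

theorem multiIndexFactorial_congr {l₁ l₂ : List (Fin n)} (h : l₁.Perm l₂) :
    multiIndexFactorial l₁ = multiIndexFactorial l₂ := by
  simp only [multiIndexFactorial, h.count_eq]

theorem multiIndexFactorial_mul_le_append (l₁ l₂ : List (Fin n)) :
    multiIndexFactorial l₁ * multiIndexFactorial l₂ ≤ multiIndexFactorial (l₁ ++ l₂) := by
  simp only [multiIndexFactorial, ← Finset.prod_mul_distrib, List.count_append]
  refine Finset.prod_le_prod (fun i _ => by positivity) fun i _ => ?_
  exact_mod_cast Nat.le_of_dvd (Nat.factorial_pos _)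
    (Nat.factorial_mul_factorial_dvd_factorial_add _ _)

theorem pow_length_le_multiIndexFactorial_mul_exp (l : List (Fin n)) {y : ℝ} (hy : 0 ≤ y) :
    y ^ l.length ≤ multiIndexFactorial l * Real.exp (n * y) := by
  have hlen : ∑ i : Fin n, l.count i = l.length := by
    simpa using Multiset.sum_count_eq_card (s := Finset.univ) (m := (l : Multiset (Fin n)))
      fun i _ => Finset.mem_univ i
  have hexp : Real.exp (n * y) = ∏ _i : Fin n, Real.exp y := by simp [Real.exp_nat_mul]
  rw [← hlen, ← Finset.prod_pow_eq_pow_sum, hexp, multiIndexFactorial, ← Finset.prod_mul_distrib]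
  refine Finset.prod_le_prod (fun i _ => by positivity) fun i _ => ?_
  rw [← div_le_iff₀' (by positivity)]
  exact Real.pow_div_factorial_le_exp y hy _

theorem pow_mul_factorial_div_pow_le_exp {C δ ρ x : ℝ} (hC : 0 ≤ C) (hρ : C * Real.exp δ ≤ ρ)
    (hx : 0 < x) {j : ℕ} (hj : j * ρ ≤ x) : C ^ j * j ! / x ^ j ≤ Real.exp (-(δ * j)) := by
  have hbase : C * j / x ≤ Real.exp (-δ) := by
    rw [div_le_iff₀ hx, Real.exp_neg, ← div_eq_inv_mul, le_div_iff₀ (Real.exp_pos δ)]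
    calc C * j * Real.exp δ = j * (C * Real.exp δ) := by ring
      _ ≤ j * ρ := by gcongr
      _ ≤ x := hj
  calc C ^ j * j ! / x ^ j ≤ C ^ j * (j : ℝ) ^ j / x ^ j := by
        gcongr
        exact_mod_cast Nat.factorial_le_pow j
    _ = (C * j / x) ^ j := by rw [div_pow, mul_pow]
    _ ≤ Real.exp (-δ) ^ j := by gcongr
    _ = Real.exp (-(δ * j)) := by rw [← Real.exp_nat_mul]; ring_nf

theorem exists_pos_mul_exp_eq {C ρ : ℝ} (hC : 0 < C) (hρ : C < ρ) :
    ∃ δ, 0 < δ ∧ C * Real.exp δ = ρ :=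
  ⟨Real.log (ρ / C), Real.log_pos ((one_lt_div hC).2 hρ), by
    rw [Real.exp_log (div_pos (hC.trans hρ) hC), mul_div_cancel₀ ρ hC.ne']⟩

theorem sum_range_exp_neg_mul_le {c : ℝ} (hc : 0 < c) (N : ℕ) :
    ∑ j ∈ Finset.range N, Real.exp (-(c * j)) ≤ (1 - Real.exp (-c))⁻¹ := by
  have hlt : Real.exp (-c) < 1 := Real.exp_lt_one_iff.2 (neg_lt_zero.2 hc)
  have hpow : ∀ j : ℕ, Real.exp (-(c * j)) = Real.exp (-c) ^ j := fun j => by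
    rw [← Real.exp_nat_mul]; ring_nf
  simp only [hpow, ← tsum_geometric_of_lt_one (Real.exp_pos _).le hlt]
  exact (summable_geometric_of_lt_one (Real.exp_pos _).le hlt).sum_le_tsum _
    fun j _ => by positivity

theorem inv_one_sub_exp_neg_pos {c : ℝ} (hc : 0 < c) : 0 < (1 - Real.exp (-c))⁻¹ :=
  inv_pos.2 (sub_pos.2 (Real.exp_lt_one_iff.2 (neg_lt_zero.2 hc)))

theorem exists_rpow_le_mul_exp (m : ℝ) {σ ε : ℝ} (hσ : 0 < σ) (hε : 0 < ε) :
    ∃ K, 0 < K ∧ ∀ x, σ ≤ x → x ^ m ≤ K * Real.exp (ε * x) := by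
  obtain ⟨X, hX⟩ := Filter.eventually_atTop.1
    ((isLittleO_rpow_exp_pos_mul_atTop m hε).bound one_pos)
  obtain ⟨B, hB⟩ := (isCompact_Icc (a := σ) (b := X)).exists_bound_of_continuousOn
    (f := fun x => x ^ m) fun x hx =>
      (Real.continuousAt_rpow_const x m (.inl (hσ.trans_le hx.1).ne')).continuousWithinAt
  refine ⟨max B 1, by positivity, fun x hx => ?_⟩
  have hone : 1 ≤ Real.exp (ε * x) :=
    Real.one_le_exp (mul_nonneg hε.le (hσ.le.trans hx))
  rcases le_total x X with hxX | hXx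
  · calc x ^ m ≤ B := (le_abs_self _).trans (hB x ⟨hx, hxX⟩)
      _ ≤ max B 1 * 1 := by rw [mul_one]; exact le_max_left B 1
      _ ≤ max B 1 * Real.exp (ε * x) := by gcongr
  · calc x ^ m ≤ 1 * Real.exp (ε * x) := by
          simpa [Real.abs_exp] using (le_abs_self _).trans (hX x hXx)
      _ ≤ max B 1 * Real.exp (ε * x) := by gcongr; exact le_max_right B 1

theorem mul_exp_neg_le_max_mul_exp {B c x : ℝ} (hc : 0 < c) (hx : 0 ≤ x) :
    B * Real.exp (-(c * x)) ≤ max B c⁻¹ * Real.exp (-(max B c⁻¹)⁻¹ * x) := by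
  have hK : (max B c⁻¹)⁻¹ ≤ c := inv_le_of_inv_le₀ hc (le_max_right B c⁻¹)
  rw [neg_mul]
  gcongr
  exact le_max_left B c⁻¹

end Estimates

section Amplitudes

variable {F : Type*} [NormedAddCommGroup F] [NormedSpace ℝ F]

/-- The amplitude estimates of order `m` with constants `M`, `C`, `R`, for an amplitude frozen at
one value of the spatial variables. Bounds uniform in those variables are expressed by asking for
the same constants at each of their values. -/
structure IsPseudoanalyticAmplitude (m M C R : ℝ) (b : (Fin n → ℝ) → F) : Prop where
  contDiffOn : ContDiffOn ℝ (⊤ : ℕ∞) b {η | η ≠ 0}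
  norm_pderivEtas_le : ∀ (l : List (Fin n)) (η : Fin n → ℝ), η ≠ 0 →
    R * max 1 (l.length : ℝ) ≤ ‖η‖ →
    ‖pderivEtas l b η‖ ≤ M * C ^ l.length * multiIndexFactorial l * ‖η‖ ^ (m - l.length)

/-- The conditions on the `j`-th term of a formal pseudoanalytic amplitude of order `m` with
constants `M`, `C`, `R`, again frozen at one value of the spatial variables. -/
structure IsFormalTerm (m M C R : ℝ) (j : ℕ) (f : (Fin n → ℝ) → F) : Prop where
  contDiffOn : ContDiffOn ℝ (⊤ : ℕ∞) f {η | η ≠ 0}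
  norm_pderivEtas_le : ∀ (l : List (Fin n)) (η : Fin n → ℝ), η ≠ 0 →
    R * max 1 ((l.length + j : ℕ) : ℝ) ≤ ‖η‖ →
    ‖pderivEtas l f η‖ ≤ M * C ^ (l.length + j) * multiIndexFactorial l * j ! *
      ‖η‖ ^ (m - j - l.length)

/-- The rescaled Ehrenpreis cut-off `η ↦ φ_j (η / (j ρ))`: it passes from `0` to `1` in the shell
`j ρ ≤ ‖η‖ ≤ 2 j ρ` and its derivatives of order at most `j` satisfy analytic-type bounds. For
`j = 0` this forces the constant `1`. -/
structure IsEhrenpreisCutoff (ρ A : ℝ) (j : ℕ) (χ : (Fin n → ℝ) → ℝ) : Prop where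
  contDiff : ContDiff ℝ (⊤ : ℕ∞) χ
  eq_zero : ∀ η : Fin n → ℝ, ‖η‖ < j * ρ → χ η = 0
  eq_one : ∀ η : Fin n → ℝ, 2 * j * ρ ≤ ‖η‖ → χ η = 1
  norm_pderivEtas_le : ∀ (l : List (Fin n)) (η : Fin n → ℝ), l.length ≤ j →
    ‖pderivEtas l χ η‖ ≤ A ^ l.length

/-- The sum `a₀ + ∑_{j ≥ 1} ψ_j a_j`, whose value does not involve `ψ 0`. -/
noncomputable def finiteRealization (ψ : ℕ → (Fin n → ℝ) → ℝ) (a : ℕ → (Fin n → ℝ) → F)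
    (η : Fin n → ℝ) : F :=
  a 0 η + ∑' j : ℕ, ψ (j + 1) η • a (j + 1) η

variable {m M C R ρ A δ ε σ r : ℝ} {j : ℕ} {f : (Fin n → ℝ) → F} {χ : (Fin n → ℝ) → ℝ}
  {η : Fin n → ℝ} {l : List (Fin n)}

namespace IsFormalTerm

theorem contDiffAt (hf : IsFormalTerm m M C R j f) (hη : η ≠ 0) :
    ContDiffAt ℝ (⊤ : ℕ∞) f η :=
  hf.contDiffOn.contDiffAt (isOpen_ne.mem_nhds hη)

theorem norm_pderivEtas_le_exp (hf : IsFormalTerm m M C R j f) (hM : 0 ≤ M) (hC : 0 ≤ C)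
    (hδ : C * Real.exp δ ≤ σ) (hη : η ≠ 0) (hR : R * max 1 ((l.length + j : ℕ) : ℝ) ≤ ‖η‖)
    (hj : j * σ ≤ ‖η‖) :
    ‖pderivEtas l f η‖ ≤ M * C ^ l.length * multiIndexFactorial l * ‖η‖ ^ (m - l.length) *
      Real.exp (-(δ * j)) := by
  have hpos : 0 < ‖η‖ := norm_pos_iff.2 hη
  have hfact := multiIndexFactorial_pos l
  have hpow : ‖η‖ ^ (m - j - l.length) = ‖η‖ ^ (m - l.length) / ‖η‖ ^ j := by
    rw [sub_right_comm, Real.rpow_sub_natCast hpos.ne']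
  calc ‖pderivEtas l f η‖
    _ ≤ M * C ^ (l.length + j) * multiIndexFactorial l * j ! * ‖η‖ ^ (m - j - l.length) :=
        hf.norm_pderivEtas_le l η hη hR
    _ = M * C ^ l.length * multiIndexFactorial l * ‖η‖ ^ (m - l.length) *
          (C ^ j * j ! / ‖η‖ ^ j) := by rw [hpow, pow_add]; ring
    _ ≤ _ := by gcongr; exact pow_mul_factorial_div_pow_le_exp hC hδ hpos hj

end IsFormalTerm

/-- A power `x ^ l₁.length` is lost whenever `l₁` falls on the cut-off; it is paid for by `l₁!` and
half of the exponential gain. -/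
theorem leibniz_term_le {x : ℝ} (hM : 0 ≤ M) (hC : 0 ≤ C) (hA : 0 ≤ A) (hε : 0 < ε) (hx : 0 < x)
    (hεx : n * (ε * x) ≤ δ / 2 * j) {l₁ l₂ : List (Fin n)} (hl : (l₁ ++ l₂).Perm l) :
    A ^ l₁.length * (M * C ^ l₂.length * multiIndexFactorial l₂ * x ^ (m - l₂.length) *
        Real.exp (-(δ * j))) ≤
      (A / ε) ^ l₁.length * C ^ l₂.length *
        (M * multiIndexFactorial l * x ^ (m - l.length) * Real.exp (-(δ / 2 * j))) := by
  have hl₂ := multiIndexFactorial_pos l₂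
  have hlen : (l.length : ℝ) = l₁.length + l₂.length := by
    rw [← hl.length_eq, List.length_append, Nat.cast_add]
  have hsplit : x ^ (m - l₂.length) = x ^ (m - l.length) * x ^ l₁.length := by
    rw [← Real.rpow_add_natCast hx.ne', hlen]; ring_nf
  have hpow : (ε * x) ^ l₁.length ≤ multiIndexFactorial l₁ * Real.exp (δ / 2 * j) :=
    (pow_length_le_multiIndexFactorial_mul_exp l₁ (by positivity)).trans (by
      have := multiIndexFactorial_pos l₁
      gcongr)
  have hfact : multiIndexFactorial l₁ * multiIndexFactorial l₂ ≤ multiIndexFactorial l :=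
    (multiIndexFactorial_mul_le_append l₁ l₂).trans_eq (multiIndexFactorial_congr hl)
  have hexp : Real.exp (δ / 2 * j) * Real.exp (-(δ * j)) = Real.exp (-(δ / 2 * j)) := by
    rw [← Real.exp_add]; ring_nf
  calc _ = (A / ε) ^ l₁.length * C ^ l₂.length * (M * multiIndexFactorial l₂ *
          x ^ (m - l.length) * ((ε * x) ^ l₁.length * Real.exp (-(δ * j)))) := by
        rw [hsplit, div_pow, mul_pow]; field_simp
    _ ≤ (A / ε) ^ l₁.length * C ^ l₂.length * (M * multiIndexFactorial l₂ *
          x ^ (m - l.length) * (multiIndexFactorial l₁ * Real.exp (δ / 2 * j) *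
          Real.exp (-(δ * j)))) := by gcongr
    _ = (A / ε) ^ l₁.length * C ^ l₂.length * (M * (multiIndexFactorial l₁ *
          multiIndexFactorial l₂) * x ^ (m - l.length) * Real.exp (-(δ / 2 * j))) := by
        rw [← hexp]; ring
    _ ≤ _ := by gcongr

theorem mul_max_one_add_le {x k i : ℝ} (hρ : 0 < ρ) (hR : 2 * R ≤ ρ) (hi : 0 ≤ i)
    (hk : 2 * ρ * max 1 k ≤ x) (hix : i * ρ ≤ x) : R * max 1 (k + i) ≤ x := by
  have hmax : max 1 (k + i) ≤ max 1 k + i :=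
    max_le (by linarith [le_max_left 1 k]) (by linarith [le_max_right 1 k])
  calc R * max 1 (k + i) ≤ ρ / 2 * (max 1 k + i) := by gcongr; linarith
    _ ≤ x := by nlinarith [le_max_left 1 k]

namespace IsEhrenpreisCutoff

theorem one (ρ A : ℝ) : IsEhrenpreisCutoff ρ A 0 fun _ : Fin n → ℝ => 1 where
  contDiff := contDiff_const
  eq_zero η hη := absurd hη (by simp)
  eq_one _ _ := rfl
  norm_pderivEtas_le l η hl := by simp [List.length_eq_zero_iff.1 (Nat.le_zero.1 hl), pderivEtas]

theorem update_zero {ψ : ℕ → (Fin n → ℝ) → ℝ} (hψ : ∀ j, 1 ≤ j → IsEhrenpreisCutoff ρ A j (ψ j))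
    (j : ℕ) : IsEhrenpreisCutoff ρ A j (Function.update ψ 0 (fun _ => 1) j) := by
  cases j with
  | zero => simpa using one ρ A
  | succ j => simpa using hψ (j + 1) (by omega)

theorem norm_le_one (hχ : IsEhrenpreisCutoff ρ A j χ) (η : Fin n → ℝ) : ‖χ η‖ ≤ 1 := by
  simpa [pderivEtas] using hχ.norm_pderivEtas_le [] η (Nat.zero_le j)

theorem contDiffAt_smul (hχ : IsEhrenpreisCutoff ρ A j χ) (hf : IsFormalTerm m M C R j f)
    (hη : η ≠ 0) : ContDiffAt ℝ (⊤ : ℕ∞) (fun x => χ x • f x) η :=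
  hχ.contDiff.contDiffAt.smul (hf.contDiffAt hη)

theorem norm_pderivEtas_smul_le_of_mem_shell (hχ : IsEhrenpreisCutoff ρ A j χ)
    (hf : IsFormalTerm m M C R j f) (hM : 0 ≤ M) (hC : 0 ≤ C) (hA : 0 ≤ A) (hρ : 0 < ρ)
    (hR : 2 * R ≤ ρ) (hδ : C * Real.exp δ ≤ ρ) (hε : 0 < ε) (hεδ : n * (ε * (2 * ρ)) ≤ δ / 2)
    (hη : η ≠ 0) (hl : 2 * ρ * max 1 (l.length : ℝ) ≤ ‖η‖) (hlo : j * ρ ≤ ‖η‖)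
    (hhi : ‖η‖ ≤ 2 * j * ρ) :
    ‖pderivEtas l (fun x => χ x • f x) η‖ ≤
      M * (A / ε + C) ^ l.length * multiIndexFactorial l * ‖η‖ ^ (m - l.length) *
        Real.exp (-(δ / 2 * j)) := by
  have hlj : l.length ≤ j := by
    have : 2 * ρ * l.length ≤ 2 * ρ * j := by
      have : 2 * ρ * l.length ≤ 2 * ρ * max 1 (l.length : ℝ) := by
        gcongr
        exact le_max_right _ _
      linarith
    exact_mod_cast le_of_mul_le_mul_left this (by positivity)
  have hεη : n * (ε * ‖η‖) ≤ δ / 2 * j :=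
    calc n * (ε * ‖η‖) ≤ n * (ε * (2 * j * ρ)) := by gcongr
      _ = n * (ε * (2 * ρ)) * j := by ring
      _ ≤ δ / 2 * j := by gcongr
  rw [pderivEtas_smul l (hχ.contDiff.contDiffAt.of_le (by exact_mod_cast le_top))
    ((hf.contDiffAt hη).of_le (by exact_mod_cast le_top))]
  set B := M * multiIndexFactorial l * ‖η‖ ^ (m - l.length) * Real.exp (-(δ / 2 * j)) with hB
  have hterm : ∀ p ∈ splittings l, ‖pderivEtas p.1 χ η • pderivEtas p.2 f η‖ ≤
      (A / ε) ^ p.1.length * C ^ p.2.length * B := fun p hp => by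
    have hperm := append_perm_of_mem_splittings hp
    have hlen := hperm.length_eq
    rw [List.length_append] at hlen
    have hp₂ : (p.2.length : ℝ) ≤ l.length := by exact_mod_cast (by omega)
    have hRη : R * max 1 ((p.2.length + j : ℕ) : ℝ) ≤ ‖η‖ := by
      push_cast
      exact mul_max_one_add_le hρ hR (Nat.cast_nonneg j) (hl.trans' (by gcongr)) hlo
    rw [norm_smul]
    exact (mul_le_mul (hχ.norm_pderivEtas_le p.1 η (by omega))
      (hf.norm_pderivEtas_le_exp hM hC hδ hη hRη hlo) (norm_nonneg _) (by positivity)).trans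
      (leibniz_term_le hM hC hA hε (norm_pos_iff.2 hη) hεη hperm)
  calc _ ≤ ((splittings l).map fun p => (A / ε) ^ p.1.length * C ^ p.2.length * B).sum := by
        refine (List.le_sum_of_subadditive norm norm_zero.le norm_add_le _).trans ?_
        rw [List.map_map]
        exact List.sum_le_sum hterm
    _ = (A / ε + C) ^ l.length * B := by
        rw [List.sum_map_mul_right, sum_splittings_pow_mul_pow]
    _ = _ := by rw [hB]; ring

theorem norm_pderivEtas_smul_le (hχ : IsEhrenpreisCutoff ρ A j χ)
    (hf : IsFormalTerm m M C R j f) (hM : 0 ≤ M) (hC : 0 ≤ C) (hA : 0 ≤ A) (hρ : 0 < ρ)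
    (hR : 2 * R ≤ ρ) (hδ₀ : 0 ≤ δ) (hδ : C * Real.exp δ ≤ ρ) (hε : 0 < ε)
    (hεδ : n * (ε * (2 * ρ)) ≤ δ / 2) (hη : η ≠ 0)
    (hl : 2 * ρ * max 1 (l.length : ℝ) ≤ ‖η‖) :
    ‖pderivEtas l (fun x => χ x • f x) η‖ ≤
      M * (A / ε + C) ^ l.length * multiIndexFactorial l * ‖η‖ ^ (m - l.length) *
        Real.exp (-(δ / 2 * j)) := by
  have hfact := multiIndexFactorial_pos l
  rcases lt_or_ge ‖η‖ (j * ρ) with hin | hlo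
  · have heq : (fun x => χ x • f x) =ᶠ[𝓝 η] fun _ => 0 := by
      filter_upwards [continuous_norm.continuousAt.eventually_lt_const hin] with x hx
      rw [hχ.eq_zero x hx, zero_smul]
    rw [(pderivEtas_congr_of_eventuallyEq l heq).eq_of_nhds, pderivEtas_zero, norm_zero]
    positivity
  rcases lt_or_ge (2 * j * ρ) ‖η‖ with hout | hhi
  · have heq : (fun x => χ x • f x) =ᶠ[𝓝 η] f := by
      filter_upwards [continuous_norm.continuousAt.eventually_const_lt hout] with x hx
      rw [hχ.eq_one x hx.le, one_smul]
    have hRη : R * max 1 ((l.length + j : ℕ) : ℝ) ≤ ‖η‖ := by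
      push_cast
      exact mul_max_one_add_le hρ hR (Nat.cast_nonneg j) hl hlo
    rw [(pderivEtas_congr_of_eventuallyEq l heq).eq_of_nhds]
    refine (hf.norm_pderivEtas_le_exp hM hC hδ hη hRη hlo).trans ?_
    have hCle : C ≤ A / ε + C := le_add_of_nonneg_left (by positivity)
    gcongr
    linarith
  · exact hχ.norm_pderivEtas_smul_le_of_mem_shell hf hM hC hA hρ hR hδ hε hεδ hη hl hlo hhi

theorem sub_ite_eq_zero (hχ : IsEhrenpreisCutoff ρ A j χ) (hρ : 0 ≤ ρ) (hr : 0 < r)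
    (h : ‖η‖ < j * min ρ r ∨ j * (2 * ρ + r) ≤ ‖η‖) :
    χ η - (if j ≤ ⌊‖η‖ / r⌋₊ then 1 else 0) = 0 := by
  have hfloor : j ≤ ⌊‖η‖ / r⌋₊ ↔ j * r ≤ ‖η‖ := by
    rw [Nat.le_floor_iff (by positivity), le_div_iff₀ hr]
  have hj : (0 : ℝ) ≤ j := Nat.cast_nonneg j
  rw [sub_eq_zero]
  rcases h with h | h
  · rw [mul_min_of_nonneg _ _ hj, lt_min_iff] at h
    rw [hχ.eq_zero η h.1, if_neg (hfloor.not.2 (not_le.2 h.2))]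
  · rw [hχ.eq_one η (by nlinarith), if_pos (hfloor.2 (by nlinarith))]

theorem norm_sub_ite_le_two (hχ : IsEhrenpreisCutoff ρ A j χ) (p : Prop) [Decidable p] :
    ‖χ η - (if p then 1 else 0)‖ ≤ 2 := by
  calc ‖χ η - (if p then 1 else 0)‖ ≤ ‖χ η‖ + ‖(if p then 1 else 0 : ℝ)‖ := norm_sub_le _ _
    _ ≤ 1 + 1 := add_le_add (hχ.norm_le_one η) (by split_ifs <;> simp)
    _ = 2 := one_add_one_eq_two

theorem norm_sub_ite_smul_le {c K : ℝ} (hχ : IsEhrenpreisCutoff ρ A j χ)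
    (hf : IsFormalTerm m M C R j f) (hM : 0 ≤ M) (hC : 0 ≤ C) (hρ : 0 < ρ) (hr : 0 < r)
    (hR : R ≤ min ρ r) (hδ : C * Real.exp δ ≤ min ρ r) (hc₀ : 0 ≤ c)
    (hc : 4 * c * (2 * ρ + r) ≤ δ) (hK : 0 ≤ K)
    (hpow : ∀ x, min ρ r ≤ x → x ^ m ≤ K * Real.exp (c * x)) :
    ‖(χ η - (if j ≤ ⌊‖η‖ / r⌋₊ then 1 else 0)) • f η‖ ≤
      2 * M * K * Real.exp (-(c * ‖η‖)) * Real.exp (-(δ / 2 * j)) := by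
  by_cases h : ‖η‖ < j * min ρ r ∨ j * (2 * ρ + r) ≤ ‖η‖
  · rw [hχ.sub_ite_eq_zero hρ.le hr h, zero_smul, norm_zero]
    positivity
  obtain ⟨hlo, hhi⟩ : j * min ρ r ≤ ‖η‖ ∧ ‖η‖ < j * (2 * ρ + r) := by simpa using h
  have hσ : 0 < min ρ r := lt_min hρ hr
  have hj : (1 : ℝ) ≤ j := by
    have : 0 < (j : ℝ) * (2 * ρ + r) := (norm_nonneg η).trans_lt hhi
    exact_mod_cast (pos_of_mul_pos_left this (by positivity) : (0 : ℝ) < j)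
  have hση : min ρ r ≤ ‖η‖ := (le_mul_of_one_le_left hσ.le hj).trans hlo
  have hRη : R * max 1 (((([] : List (Fin n)).length + j : ℕ)) : ℝ) ≤ ‖η‖ := by
    rw [List.length_nil, zero_add, max_eq_right hj, mul_comm]
    exact (mul_le_mul_of_nonneg_left hR (Nat.cast_nonneg j)).trans hlo
  have hfη : ‖f η‖ ≤ M * ‖η‖ ^ m * Real.exp (-(δ * j)) := by
    simpa [pderivEtas, multiIndexFactorial_nil] using
      hf.norm_pderivEtas_le_exp hM hC hδ (norm_pos_iff.1 (hσ.trans_le hση)) hRη hlo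
  have hexp : c * ‖η‖ + -(δ * j) ≤ -(c * ‖η‖) + -(δ / 2 * j) := by
    nlinarith [mul_le_mul_of_nonneg_left hhi.le hc₀,
      mul_le_mul_of_nonneg_right hc (zero_le_one.trans hj)]
  calc _ ≤ 2 * (M * ‖η‖ ^ m * Real.exp (-(δ * j))) := by
        rw [norm_smul]
        exact mul_le_mul (hχ.norm_sub_ite_le_two _) hfη (norm_nonneg _) zero_le_two
    _ ≤ 2 * (M * (K * Real.exp (c * ‖η‖)) * Real.exp (-(δ * j))) := by
        gcongr
        exact hpow _ hση
    _ = 2 * M * K * Real.exp (c * ‖η‖ + -(δ * j)) := by rw [Real.exp_add]; ring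
    _ ≤ 2 * M * K * Real.exp (-(c * ‖η‖) + -(δ / 2 * j)) := by gcongr
    _ = _ := by rw [Real.exp_add]; ring

end IsEhrenpreisCutoff

section FiniteRealization

variable {ψ : ℕ → (Fin n → ℝ) → ℝ} {a : ℕ → (Fin n → ℝ) → F}

theorem finiteRealization_eq_sum (hψ : ∀ j, 1 ≤ j → IsEhrenpreisCutoff ρ A j (ψ j)) (hρ : 0 ≤ ρ)
    {N : ℕ} (hN : ‖η‖ < N * ρ) :
    finiteRealization ψ a η =
      ∑ j ∈ Finset.range N, Function.update ψ 0 (fun _ => 1) j η • a j η := by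
  obtain _ | N := N
  · simp [(norm_nonneg η).not_gt] at hN
  have htail : ∀ j ∉ Finset.range N, ψ (j + 1) η • a (j + 1) η = 0 := fun j hj => by
    have hNj : N ≤ j := by simpa using hj
    rw [(hψ (j + 1) (by omega)).eq_zero η (hN.trans_le (by gcongr)), zero_smul]
  rw [finiteRealization, tsum_eq_sum htail, Finset.sum_range_succ', add_comm]
  simp

theorem finiteRealization_eq_of_norm_lt (hψ : ∀ j, 1 ≤ j → IsEhrenpreisCutoff ρ A j (ψ j))
    (hη : ‖η‖ < ρ) : finiteRealization ψ a η = a 0 η := by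
  simp [finiteRealization_eq_sum (N := 1) hψ ((norm_nonneg η).trans hη.le) (by simpa using hη)]

theorem exists_finiteRealization_eventuallyEq_sum
    (hψ : ∀ j, 1 ≤ j → IsEhrenpreisCutoff ρ A j (ψ j)) (hρ : 0 < ρ) (η : Fin n → ℝ) :
    ∃ N, finiteRealization ψ a =ᶠ[𝓝 η]
      fun x => ∑ j ∈ Finset.range N, Function.update ψ 0 (fun _ => 1) j x • a j x := by
  obtain ⟨N, hN⟩ := exists_nat_gt (‖η‖ / ρ)
  refine ⟨N, ?_⟩
  filter_upwards [continuous_norm.continuousAt.eventually_lt_const ((div_lt_iff₀ hρ).1 hN)]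
    with x hx
  exact finiteRealization_eq_sum hψ hρ.le hx

theorem isPseudoanalyticAmplitude_finiteRealization
    (ha : ∀ j, IsFormalTerm m M C R j (a j)) (hψ : ∀ j, 1 ≤ j → IsEhrenpreisCutoff ρ A j (ψ j))
    (hM : 0 ≤ M) (hC : 0 ≤ C) (hA : 0 ≤ A) (hρ : 0 < ρ) (hR : 2 * R ≤ ρ) (hδ₀ : 0 < δ)
    (hδ : C * Real.exp δ ≤ ρ) (hε : 0 < ε) (hεδ : n * (ε * (2 * ρ)) ≤ δ / 2) :
    IsPseudoanalyticAmplitude m (M * (1 - Real.exp (-(δ / 2)))⁻¹) (A / ε + C) (2 * ρ)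
      (finiteRealization ψ a) where
  contDiffOn η hη := by
    obtain ⟨N, hN⟩ := exists_finiteRealization_eventuallyEq_sum (a := a) hψ hρ η
    refine ContDiffAt.contDiffWithinAt (ContDiffAt.congr_of_eventuallyEq ?_ hN)
    exact ContDiffAt.sum fun j _ =>
      (IsEhrenpreisCutoff.update_zero hψ j).contDiffAt_smul (ha j) hη
  norm_pderivEtas_le l η hη hl := by
    obtain ⟨N, hN⟩ := exists_finiteRealization_eventuallyEq_sum (a := a) hψ hρ η
    have hfact := multiIndexFactorial_pos l
    have hχ := IsEhrenpreisCutoff.update_zero hψ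
    rw [(pderivEtas_congr_of_eventuallyEq l hN).eq_of_nhds, pderivEtas_sum _ l fun j _ =>
      ((hχ j).contDiffAt_smul (ha j) hη).of_le (by exact_mod_cast le_top)]
    calc _ ≤ ∑ j ∈ Finset.range N, M * (A / ε + C) ^ l.length * multiIndexFactorial l *
            ‖η‖ ^ (m - l.length) * Real.exp (-(δ / 2 * j)) :=
          norm_sum_le_of_le _ fun j _ =>
            (hχ j).norm_pderivEtas_smul_le (ha j) hM hC hA hρ hR hδ₀.le hδ hε hεδ hη hl
      _ ≤ M * (A / ε + C) ^ l.length * multiIndexFactorial l * ‖η‖ ^ (m - l.length) *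
            (1 - Real.exp (-(δ / 2)))⁻¹ := by
          rw [← Finset.mul_sum]
          gcongr
          exact sum_range_exp_neg_mul_le (half_pos hδ₀) N
      _ = _ := by ring

theorem norm_finiteRealization_sub_sum_le {c K : ℝ} (ha : ∀ j, IsFormalTerm m M C R j (a j))
    (hψ : ∀ j, 1 ≤ j → IsEhrenpreisCutoff ρ A j (ψ j)) (hM : 0 ≤ M) (hC : 0 ≤ C) (hρ : 0 < ρ)
    (hr : 0 < r) (hR : R ≤ min ρ r) (hδ₀ : 0 < δ) (hδ : C * Real.exp δ ≤ min ρ r) (hc₀ : 0 ≤ c)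
    (hc : 4 * c * (2 * ρ + r) ≤ δ) (hK : 0 ≤ K)
    (hpow : ∀ x, min ρ r ≤ x → x ^ m ≤ K * Real.exp (c * x)) (η : Fin n → ℝ) :
    ‖finiteRealization ψ a η - ∑ j ∈ Finset.range (⌊‖η‖ / r⌋₊ + 1), a j η‖ ≤
      2 * M * K * (1 - Real.exp (-(δ / 2)))⁻¹ * Real.exp (-(c * ‖η‖)) := by
  obtain ⟨N, hN⟩ := exists_nat_gt (max (‖η‖ / ρ) ⌊‖η‖ / r⌋₊)
  obtain ⟨hNρ, hNr⟩ := max_lt_iff.1 hN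
  have hpartial : ∑ j ∈ Finset.range (⌊‖η‖ / r⌋₊ + 1), a j η =
      ∑ j ∈ Finset.range N, (if j ≤ ⌊‖η‖ / r⌋₊ then 1 else 0 : ℝ) • a j η := by
    simp only [ite_smul, one_smul, zero_smul, ← Finset.sum_filter]
    have : ⌊‖η‖ / r⌋₊ < N := by exact_mod_cast hNr
    refine Finset.sum_congr ?_ fun _ _ => rfl
    ext j
    simp only [Finset.mem_range, Finset.mem_filter]
    omega
  rw [finiteRealization_eq_sum hψ hρ.le ((div_lt_iff₀ hρ).1 hNρ), hpartial,
    ← Finset.sum_sub_distrib]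
  simp only [← sub_smul]
  calc _ ≤ ∑ j ∈ Finset.range N,
          2 * M * K * Real.exp (-(c * ‖η‖)) * Real.exp (-(δ / 2 * j)) :=
        norm_sum_le_of_le _ fun j _ => (IsEhrenpreisCutoff.update_zero hψ j).norm_sub_ite_smul_le
          (ha j) hM hC hρ hr hR hδ hc₀ hc hK hpow
    _ ≤ 2 * M * K * Real.exp (-(c * ‖η‖)) * (1 - Real.exp (-(δ / 2)))⁻¹ := by
        rw [← Finset.mul_sum]
        gcongr
        exact sum_range_exp_neg_mul_le (half_pos hδ₀) N
    _ = _ := by ring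

end FiniteRealization

end Amplitudes

theorem finite_realization_exists_general {α F : Type*} [NormedAddCommGroup F] [NormedSpace ℝ F]
    {m M C R ρ A : ℝ} (hM : 0 < M) (hC : 0 < C) (hA : 0 ≤ A) (hρR : 2 * R ≤ ρ) (hρC : C < ρ)
    {a : ℕ → α → (Fin n → ℝ) → F} (ha : ∀ w j, IsFormalTerm m M C R j (a j w))
    {ψ : ℕ → (Fin n → ℝ) → ℝ} (hψ : ∀ j, 1 ≤ j → IsEhrenpreisCutoff ρ A j (ψ j)) :
    (∀ w η, ‖η‖ < ρ → finiteRealization ψ (a · w) η = a 0 w η) ∧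
    (∃ M' C' R' : ℝ, 0 < M' ∧ 0 < C' ∧ 0 < R' ∧
      ∀ w, IsPseudoanalyticAmplitude m M' C' R' (finiteRealization ψ (a · w))) ∧
    (∀ r, R ≤ r → C < r → ∃ K, 0 < K ∧ ∀ w η,
      ‖finiteRealization ψ (a · w) η - ∑ j ∈ Finset.range (⌊‖η‖ / r⌋₊ + 1), a j w η‖ ≤
        K * Real.exp (-K⁻¹ * ‖η‖)) := by
  have hρ : 0 < ρ := hC.trans hρC
  refine ⟨fun w η hη => finiteRealization_eq_of_norm_lt hψ hη, ?_, fun r hRr hCr => ?_⟩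
  · obtain ⟨δ, hδ₀, hδ⟩ := exists_pos_mul_exp_eq hC hρC
    have hG := inv_one_sub_exp_neg_pos (half_pos hδ₀)
    obtain ⟨ε, hε, hεδ⟩ : ∃ ε, 0 < ε ∧ n * (ε * (2 * ρ)) ≤ δ / 2 := by
      refine ⟨δ / (4 * ρ * (n + 1)), by positivity, ?_⟩
      field_simp
      linarith
    exact ⟨_, _, _, mul_pos hM hG, by positivity, by positivity, fun w =>
      isPseudoanalyticAmplitude_finiteRealization (ha w) hψ hM.le hC.le hA hρ hρR hδ₀ hδ.le hε hεδ⟩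
  · have hr : 0 < r := hC.trans hCr
    obtain ⟨δ, hδ₀, hδ⟩ := exists_pos_mul_exp_eq hC (lt_min hρC hCr)
    set c := δ / (4 * (2 * ρ + r)) with hc
    have hc₀ : 0 < c := by positivity
    obtain ⟨K, hK, hpow⟩ := exists_rpow_le_mul_exp m (lt_min hρ hr) hc₀
    have hcδ : 4 * c * (2 * ρ + r) ≤ δ := by rw [hc]; field_simp; rfl
    exact ⟨_, lt_max_of_lt_right (inv_pos.2 hc₀), fun w η =>
      (norm_finiteRealization_sub_sum_le (ha w) hψ hM.le hC.le hρ hr (le_min (by linarith) hRr)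
        hδ₀ hδ.le hc₀.le hcδ hK.le hpow η).trans (mul_exp_neg_le_max_mul_exp hc₀ (norm_nonneg η))⟩

/-- Construction of a finite realization of a formal pseudoanalytic amplitude
`∑_{j≥0} a_j` of order `m` (spatial variables abstracted into `α`): with Ehrenpreis
cut-offs `ψ_j` vanishing for `|η| ≤ jρ` and equal to `1` for `|η| ≥ 2jρ`
(`ρ > 2Rₐ`, `ρ > e·Cₐ`), the function `a := a₀ + ∑_{j≥1} ψ_j a_j` is a pseudoanalytic
amplitude of order `m`, equals `a₀` for `|η| < ρ`, and is a finite realization of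
`∑ a_j`: for every `R > ρ` there is `C > 0` with
`|a − ∑_{j ≤ |η|/R} a_j| ≤ C e^{−C⁻¹|η|}`. -/
theorem finite_realization_exists
    {α : Type*} (m : ℝ) (aj : ℕ → α → (Fin n → ℝ) → ℂ)
    (Ma Ca Ra : ℝ) (hMa : 0 < Ma) (hCa : 0 < Ca) (hRa : 0 < Ra)
    (hsmooth : ∀ (j : ℕ) (w : α),
      ContDiffOn ℝ (⊤ : ℕ∞) (aj j w) {η : Fin n → ℝ | η ≠ 0})
    (hformal : ∀ (j : ℕ) (l : List (Fin n)) (w : α) (η : Fin n → ℝ), η ≠ 0 →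
      Ra * max 1 ((l.length + j : ℕ) : ℝ) ≤ ‖η‖ →
      ‖pderivEtas l (aj j w) η‖ ≤
        Ma * Ca ^ (l.length + j) * (∏ i : Fin n, ((l.count i)! : ℝ)) * (j ! : ℝ) *
          ‖η‖ ^ (m - (j : ℝ) - (l.length : ℝ)))
    (ρ : ℝ) (hρRa : 2 * Ra < ρ) (hρCa : Real.exp 1 * Ca < ρ)
    (ψ : ℕ → (Fin n → ℝ) → ℝ)
    (hψsmooth : ∀ j, ContDiff ℝ (⊤ : ℕ∞) (ψ j))
    (hψzero : ∀ j : ℕ, 1 ≤ j → ∀ η : Fin n → ℝ, ‖η‖ ≤ (j : ℝ) * ρ → ψ j η = 0)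
    (hψone : ∀ j : ℕ, 1 ≤ j → ∀ η : Fin n → ℝ, 2 * (j : ℝ) * ρ ≤ ‖η‖ → ψ j η = 1)
    (hψrange : ∀ (j : ℕ) (η : Fin n → ℝ), 0 ≤ ψ j η ∧ ψ j η ≤ 1)
    (Cψ : ℝ) (hCψ : 0 < Cψ)
    (hψder : ∀ j : ℕ, 1 ≤ j → ∀ (l : List (Fin n)) (η : Fin n → ℝ), l.length ≤ j →
      ‖pderivEtas l (ψ j) η‖ ≤ (Cψ / ρ) ^ l.length)
    (a : α → (Fin n → ℝ) → ℂ)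
    (ha : ∀ (w : α) (η : Fin n → ℝ),
      a w η = aj 0 w η + ∑' j : ℕ, ((ψ (j + 1) η : ℝ) : ℂ) * aj (j + 1) w η) :
    (∀ (w : α) (η : Fin n → ℝ), ‖η‖ < ρ → a w η = aj 0 w η) ∧
    (∃ M' C' R' : ℝ, 0 < M' ∧ 0 < C' ∧ 0 < R' ∧
      ∀ (l : List (Fin n)) (w : α) (η : Fin n → ℝ), η ≠ 0 →
        R' * max 1 (l.length : ℝ) ≤ ‖η‖ →
        ‖pderivEtas l (a w) η‖ ≤
          M' * C' ^ l.length * (∏ i : Fin n, ((l.count i)! : ℝ)) *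
            ‖η‖ ^ (m - (l.length : ℝ))) ∧
    (∀ R : ℝ, ρ < R → ∃ C : ℝ, 0 < C ∧ ∀ (w : α) (η : Fin n → ℝ),
      ‖a w η - ∑ j ∈ Finset.range (Nat.floor (‖η‖ / R) + 1), aj j w η‖
        ≤ C * Real.exp (-C⁻¹ * ‖η‖)) := by
  obtain rfl : a = fun w => finiteRealization ψ (aj · w) := by
    funext w η
    simp only [ha, finiteRealization, Complex.real_smul]
  have hρ : Ca < ρ := by
    linarith [le_mul_of_one_le_left hCa.le (Real.one_le_exp zero_le_one)]
  have hCutoff (j : ℕ) (hj : 1 ≤ j) : IsEhrenpreisCutoff ρ (Cψ / ρ) j (ψ j) :=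
    ⟨hψsmooth j, fun η hη => hψzero j hj η hη.le, hψone j hj, hψder j hj⟩
  obtain ⟨hnear, ⟨M', C', R', hM', hC', hR', hamp⟩, happrox⟩ :=
    finite_realization_exists_general hMa hCa (div_nonneg hCψ.le (hCa.trans hρ).le) hρRa.le hρ
      (fun w j => ⟨hsmooth j w, fun l η => hformal j l w η⟩) hCutoff
  exact ⟨hnear, ⟨M', C', R', hM', hC', hR', fun l w => (hamp w).norm_pderivEtas_le l⟩,
    fun R hR => happrox R (by linarith) (by linarith)⟩
end

section
/- Let ψ : X × V → ℂ be holomorphic with ψ(π(χ(v)), v) real (equal to −v₁·v₂) for v in a real submanifold, and suppose Im ψ(x,v) ≥ C₁^{-1}(|Im z(x,v)|² + |Im η(x,v)|²) fails — instead prove directly: if Φ has positive semi-definite imaginary Hessian at the critical point and ψ(x,v) = Φ(z(x,v), η(x,v); x, v) is its critical value, and sup_{|s|≤1} −Im((s+iω)·∂²Φ(s+iω)) ≥ C > 0 uniformly for unit ω ∈ ℝ^{N+n} (by Hörmander Lemma 7.7.9, using ∂²Φ symmetric non-degenerate with positive semi-definite imaginary part), then for (x,v) near (x̂,v̂): Im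 ψ(x,v) ≥ c·|Im(z,η)(x,v)|² for some c > 0. -/
variable {d k : ℕ}

/-- Componentwise inclusion of a real vector into `ℂ^d`. -/
def realVec (w : Fin d → ℝ) : Fin d → ℂ := fun i => (w i : ℂ)

/-!
Two holomorphic functions with the same differential at a point and uniformly close near it are
close to second order there, by the Schwarz lemma. Hence, uniformly for `p` near `p₀`, Taylor
expansion at the critical point `W p` gives `Φ (W p + y) p = ψ p + B y y / 2 + o(‖y‖ ^ 2)` with the
Hessian `B` frozen at `p₀`. The bound on `B`, homogenized, supplies `y` with `Im y = -Im (W p)`,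
`‖y‖ ^ 2 ≤ 2 * |Im (W p)| ^ 2` and `-Im (B y y) ≥ C * |Im (W p)| ^ 2`. For this `y` the point
`W p + y` is real, where `Im Φ ≥ 0`, so `Im (ψ p) ≥ (C / 2) * |Im (W p)| ^ 2 - o(|Im (W p)| ^ 2)`.
-/

section UniformConvergence

open Filter Topology Function

theorem exists_mem_nhds_tendstoUniformlyOn {α X β : Type*} [TopologicalSpace α]
    [TopologicalSpace X] [LocallyCompactSpace X] [UniformSpace β] {f : α → X → β} {a : α} {x : X}
    (hf : ∀ᶠ q in 𝓝 (a, x), ContinuousAt (uncurry f) q) :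
    ∃ K ∈ 𝓝 x, TendstoUniformlyOn f (f a) (𝓝 a) K := by
  obtain ⟨s, hs, t, ht, hst⟩ := mem_nhds_prod_iff.1 hf
  obtain ⟨K, hK, hKt, hKc⟩ := local_compact_nhds ht
  refine ⟨K, hK, fun u hu => ?_⟩
  have hcont : ContinuousOn (uncurry f) (s ×ˢ K) := fun q hq =>
    (hst ⟨hq.1, hKt hq.2⟩ : ContinuousAt (uncurry f) q).continuousWithinAt
  obtain ⟨v, hv, hvu⟩ :=
    hKc.mem_uniformity_of_prod hcont (mem_of_mem_nhds hs) (symm_le_uniformity hu)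
  rw [nhdsWithin_eq_nhds.2 hs] at hv
  filter_upwards [hv] with b hb y hy using hvu b hb y hy

theorem exists_mem_nhds_tendstoUniformlyOn_add {E P β : Type*} [AddMonoid E]
    [TopologicalSpace E] [ContinuousAdd E] [LocallyCompactSpace E] [TopologicalSpace P]
    [UniformSpace β] {Φ : E → P → β} {W : P → E} {p₀ : P}
    (hcont : ∀ᶠ q in 𝓝 (W p₀, p₀), ContinuousAt (uncurry Φ) q) (hW : ContinuousAt W p₀) :
    ∃ K ∈ 𝓝 (0 : E), TendstoUniformlyOn (fun p y => Φ (W p + y) p)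
      (fun y => Φ (W p₀ + y) p₀) (𝓝 p₀) K := by
  let translate : (E × P) × E → E × P := fun q => (q.1.1 + q.2, q.1.2)
  have htranslate : Continuous translate := by fun_prop
  have hlim : Tendsto translate (𝓝 ((W p₀, p₀), 0)) (𝓝 (W p₀, p₀)) :=
    htranslate.tendsto' _ _ (by simp [translate])
  obtain ⟨K, hK, hunif⟩ := exists_mem_nhds_tendstoUniformlyOn
    (f := fun q y => uncurry Φ (translate (q, y)))
    ((hlim.eventually hcont).mono fun q hq => hq.comp htranslate.continuousAt)
  have hpath : Tendsto (fun p => (W p, p)) (𝓝 p₀) (𝓝 (W p₀, p₀)) := hW.prodMk continuousAt_id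
  exact ⟨K, hK, fun u hu => hpath.eventually (hunif u hu)⟩

end UniformConvergence

section SecondOrderExpansion

open Topology Metric Asymptotics Function

variable {𝕜 E F : Type*} [RCLike 𝕜] [NormedAddCommGroup E] [NormedSpace 𝕜 E]
  [NormedAddCommGroup F] [NormedSpace 𝕜 F] {f : E → F} {f' : E → E →L[𝕜] F} {x : E}

theorem isLittleO_norm_sub_pow_succ_of_hasFDerivAt {n : ℕ}
    (hf : ∀ᶠ y in 𝓝 x, HasFDerivAt f (f' y) y) (hf' : f' =o[𝓝 x] fun y => ‖y - x‖ ^ n) :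
    (fun y => f y - f x) =o[𝓝 x] fun y => ‖y - x‖ ^ (n + 1) := by
  let : NormedSpace ℝ E := .restrictScalars ℝ 𝕜 E
  refine IsLittleO.of_bound fun ε hε => ?_
  obtain ⟨δ, hδ, hball⟩ := Metric.eventually_nhds_iff_ball.1 (hf.and (hf'.bound hε))
  filter_upwards [ball_mem_nhds x hδ] with y hy
  have hsub : closedBall x ‖y - x‖ ⊆ ball x δ :=
    closedBall_subset_ball (by rwa [← dist_eq_norm])
  have hbound : ∀ z ∈ closedBall x ‖y - x‖, ‖f' z‖ ≤ ε * ‖y - x‖ ^ n := fun z hz =>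
    calc ‖f' z‖ ≤ ε * ‖‖z - x‖ ^ n‖ := (hball z (hsub hz)).2
      _ = ε * ‖z - x‖ ^ n := by rw [norm_pow, norm_norm]
      _ ≤ ε * ‖y - x‖ ^ n := by gcongr; exact mem_closedBall_iff_norm.1 hz
  calc ‖f y - f x‖ ≤ ε * ‖y - x‖ ^ n * ‖y - x‖ :=
        (convex_closedBall x _).norm_image_sub_le_of_norm_hasFDerivWithin_le
          (fun z hz => (hball z (hsub hz)).1.hasFDerivWithinAt) hbound
          (mem_closedBall_self (norm_nonneg _)) (mem_closedBall_iff_norm.2 le_rfl)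
    _ = ε * ‖‖y - x‖ ^ (n + 1)‖ := by rw [norm_pow, norm_norm, pow_succ, mul_assoc]

theorem isLittleO_taylor_two_of_hasFDerivAt {f'' : E →L[𝕜] E →L[𝕜] F}
    (hf : ∀ᶠ y in 𝓝 x, HasFDerivAt f (f' y) y) (hf' : HasFDerivAt f' f'' x) :
    (fun y => f y - f x - f' x (y - x) - (1 / 2 : 𝕜) • f'' (y - x) (y - x)) =o[𝓝 x]
      fun y => ‖y - x‖ ^ 2 := by
  have hsymm := second_derivative_symmetric_of_eventually hf hf'
  have hderiv : ∀ᶠ y in 𝓝 x,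
      HasFDerivAt (fun y => f y - f' x (y - x) - (1 / 2 : 𝕜) • f'' (y - x) (y - x))
        (f' y - f' x - f'' (y - x)) y := by
    filter_upwards [hf] with y hy
    have hsub : HasFDerivAt (fun y : E => y - x) (.id 𝕜 E) y := (hasFDerivAt_id y).sub_const x
    have hquad := (((f''.hasFDerivAt.comp y hsub).clm_apply hsub).const_smul (1 / 2 : 𝕜))
    refine ((hy.sub ((f' x).hasFDerivAt.comp y hsub)).sub hquad).congr_fderiv ?_
    ext h
    simp only [one_div, comp_apply, ContinuousLinearMap.comp_id, sub_apply, smul_apply, add_apply,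
      ContinuousLinearMap.flip_apply, hsymm h]
    module
  have hlittleO : (fun y => f' y - f' x - f'' (y - x)) =o[𝓝 x] fun y => ‖y - x‖ ^ 1 := by
    simpa only [pow_one] using hf'.isLittleO.norm_right
  refine (isLittleO_norm_sub_pow_succ_of_hasFDerivAt hderiv hlittleO).congr_left fun y => ?_
  simp only [sub_self, map_zero, smul_zero, sub_zero]
  abel

end SecondOrderExpansion

section Holomorphic

open Filter Topology Metric Set Asymptotics Function

variable {E F : Type*} [NormedAddCommGroup E] [NormedSpace ℂ E]
  [NormedAddCommGroup F] [NormedSpace ℂ F]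

theorem norm_sub_le_of_fderiv_eq_zero {f : E → F} {x y : E} {r M : ℝ}
    (hf : DifferentiableOn ℂ f (ball x r)) (hx : fderiv ℂ f x = 0)
    (hM : ∀ z ∈ ball x r, ‖f z‖ ≤ M) (hy : y ∈ ball x r) :
    ‖f y - f x‖ ≤ 2 * M * (‖y - x‖ / r) ^ 2 := by
  have hxmem : x ∈ ball x r := mem_ball_self (pos_of_mem_ball hy)
  have hmaps : MapsTo f (ball x r) (closedBall (f x) (2 * M)) := fun z hz => by
    rw [mem_closedBall, dist_eq_norm, two_mul]
    exact (norm_sub_le _ _).trans (add_le_add (hM z hz) (hM x hxmem))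
  have hlittleO : (f · - f x) =o[𝓝 x] fun z => ‖z - x‖ ^ 1 := by
    have hderiv := (hf.differentiableAt (isOpen_ball.mem_nhds hxmem)).hasFDerivAt
    rw [hx] at hderiv
    simpa using hderiv.isLittleO.norm_right
  simpa only [dist_eq_norm] using
    Complex.dist_le_mul_div_pow_of_mapsTo_ball_of_isLittleO hf hmaps hlittleO hy

/-- The Schwarz lemma upgrades uniform closeness to closeness to second order at `x`. -/
theorem isLittleO_sub_of_tendstoUniformlyOn_of_fderiv_eq {ι : Type*} {l : Filter ι}
    {f : ι → E → F} {g : E → F} {x : E} {s : Set E} (hs : s ∈ 𝓝 x)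
    (hfg : TendstoUniformlyOn f g l s)
    (hf : ∀ᶠ q in l ×ˢ 𝓝 x, DifferentiableAt ℂ (f q.1) q.2)
    (hg : ∀ᶠ y in 𝓝 x, DifferentiableAt ℂ g y)
    (hderiv : ∀ᶠ i in l, fderiv ℂ (f i) x = fderiv ℂ g x) :
    (fun q : ι × E => f q.1 q.2 - f q.1 x - (g q.2 - g x)) =o[l ×ˢ 𝓝 x]
      fun q => ‖q.2 - x‖ ^ 2 := by
  obtain ⟨pf, hpf, pg, hpg, hdiff⟩ := eventually_prod_iff.1 hf
  obtain ⟨r, hr, hball⟩ := Metric.eventually_nhds_iff_ball.1 ((hpg.and hg).and hs)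
  refine IsLittleO.of_bound fun ε hε => ?_
  have hclose := Metric.tendstoUniformlyOn_iff.1 hfg (ε * r ^ 2 / 2) (by positivity)
  filter_upwards [((hpf.and hderiv).and hclose).prod_mk (ball_mem_nhds x hr)]
    with ⟨i, y⟩ ⟨⟨⟨hi, hix⟩, hiclose⟩, hy⟩
  have hfi : ∀ z ∈ ball x r, DifferentiableAt ℂ (f i) z := fun z hz => hdiff hi (hball z hz).1.1
  have hgr : ∀ z ∈ ball x r, DifferentiableAt ℂ g z := fun z hz => (hball z hz).1.2
  have hjet : fderiv ℂ (f i - g) x = 0 := by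
    rw [fderiv_sub (hfi x (mem_ball_self hr)) (hgr x (mem_ball_self hr)), hix, sub_self]
  have hbound : ∀ z ∈ ball x r, ‖(f i - g) z‖ ≤ ε * r ^ 2 / 2 := fun z hz => by
    rw [Pi.sub_apply, ← dist_eq_norm, dist_comm]
    exact (hiclose z (hball z hz).2).le
  have hschwarz := norm_sub_le_of_fderiv_eq_zero
    (fun z hz => ((hfi z hz).sub (hgr z hz)).differentiableWithinAt) hjet hbound hy
  calc ‖f i y - f i x - (g y - g x)‖ = ‖(f i - g) y - (f i - g) x‖ := by
        simp only [Pi.sub_apply, sub_sub_sub_comm]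
    _ ≤ 2 * (ε * r ^ 2 / 2) * (‖y - x‖ / r) ^ 2 := hschwarz
    _ = ε * ‖‖y - x‖ ^ 2‖ := by rw [norm_pow, norm_norm]; field_simp

variable {P : Type*} [TopologicalSpace P] {Φ : E → P → F} {W : P → E} {p₀ : P}

theorem isLittleO_taylor_two_at_critical_point [LocallyCompactSpace E]
    {B : E →L[ℂ] E →L[ℂ] F}
    (hcont : ∀ᶠ q in 𝓝 (W p₀, p₀), ContinuousAt (uncurry Φ) q)
    (hhol : ∀ᶠ q in 𝓝 (W p₀, p₀), DifferentiableAt ℂ (fun w => Φ w q.2) q.1)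
    (hW : ContinuousAt W p₀) (hcrit : ∀ᶠ p in 𝓝 p₀, fderiv ℂ (fun w => Φ w p) (W p) = 0)
    (hB : HasFDerivAt (fderiv ℂ fun w => Φ w p₀) B (W p₀)) :
    (fun q : P × E => Φ (W q.1 + q.2) q.1 - Φ (W q.1) q.1 - (1 / 2 : ℂ) • B q.2 q.2)
      =o[𝓝 p₀ ×ˢ 𝓝 0] fun q => ‖q.2‖ ^ 2 := by
  obtain ⟨K, hK, hunif⟩ := exists_mem_nhds_tendstoUniformlyOn_add hcont hW
  have hdiff : ∀ᶠ q in 𝓝 p₀ ×ˢ 𝓝 (0 : E),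
      DifferentiableAt ℂ (fun y => Φ (W q.1 + y) q.1) q.2 := by
    have hlim : Tendsto (fun q : P × E => (W q.1 + q.2, q.1)) (𝓝 p₀ ×ˢ 𝓝 0)
        (𝓝 (W p₀ + 0, p₀)) :=
      ((hW.tendsto.comp tendsto_fst).add tendsto_snd).prodMk_nhds tendsto_fst
    rw [add_zero] at hlim
    filter_upwards [hlim.eventually hhol] with q hq
    exact (differentiableAt_comp_add_left (f := fun w => Φ w q.1) (W q.1)).2 hq
  have hdiff₀ : ∀ᶠ y in 𝓝 0, DifferentiableAt ℂ (fun y => Φ (W p₀ + y) p₀) y :=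
    hdiff.curry.self_of_nhds
  have hfderiv (p : P) (y : E) : fderiv ℂ (fun y => Φ (W p + y) p) y =
      fderiv ℂ (fun w => Φ w p) (W p + y) := fderiv_comp_add_left (f := fun w => Φ w p) (W p)
  have hcrit' : ∀ᶠ p in 𝓝 p₀, fderiv ℂ (fun y => Φ (W p + y) p) 0 = 0 :=
    hcrit.mono fun p hp => by rw [hfderiv, add_zero, hp]
  have hcrit₀ := hcrit'.self_of_nhds
  have hB' : HasFDerivAt (fderiv ℂ fun y => Φ (W p₀ + y) p₀) B 0 := by
    rw [funext (hfderiv p₀), hasFDerivAt_comp_add_left, add_zero]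
    exact hB
  have hperturb := isLittleO_sub_of_tendstoUniformlyOn_of_fderiv_eq hK hunif hdiff hdiff₀
    (hcrit'.mono fun p hp => hp.trans hcrit₀.symm)
  have htaylor := (isLittleO_taylor_two_of_hasFDerivAt
    (hdiff₀.mono fun y hy => hy.hasFDerivAt) hB').comp_tendsto
    (tendsto_snd : Tendsto Prod.snd (𝓝 p₀ ×ˢ 𝓝 (0 : E)) (𝓝 0))
  refine (hperturb.add htaylor).congr (fun q => ?_) fun q => by rw [sub_zero]
  simp only [comp_apply, add_zero, sub_zero, hcrit₀, zero_apply]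
  abel

theorem eventually_mul_le_im_critical_value [LocallyCompactSpace E] {Φ : E → P → ℂ}
    {B : E →L[ℂ] E →L[ℂ] ℂ} {c C : ℝ} {T : P → ℝ} {y : P → E}
    (hcont : ∀ᶠ q in 𝓝 (W p₀, p₀), ContinuousAt (uncurry Φ) q)
    (hhol : ∀ᶠ q in 𝓝 (W p₀, p₀), DifferentiableAt ℂ (fun w => Φ w q.2) q.1)
    (hW : ContinuousAt W p₀) (hcrit : ∀ᶠ p in 𝓝 p₀, fderiv ℂ (fun w => Φ w p) (W p) = 0)
    (hB : HasFDerivAt (fderiv ℂ fun w => Φ w p₀) B (W p₀))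
    (hy : Tendsto y (𝓝 p₀) (𝓝 0)) (hIm : ∀ᶠ p in 𝓝 p₀, 0 ≤ (Φ (W p + y p) p).im)
    (hT : ∀ p, 0 ≤ T p) (hyT : (fun p => ‖y p‖ ^ 2) =O[𝓝 p₀] T)
    (hBy : ∀ p, C * T p ≤ -(B (y p) (y p)).im) (hc : c < C / 2) :
    ∀ᶠ p in 𝓝 p₀, c * T p ≤ (Φ (W p) p).im := by
  have htaylor := ((isLittleO_taylor_two_at_critical_point hcont hhol hW hcrit hB).comp_tendsto
    (tendsto_id.prodMk hy)).trans_isBigO hyT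
  filter_upwards [hIm, htaylor.bound (sub_pos.2 hc)] with p hp hbound
  have hrem : (Φ (W p + y p) p - Φ (W p) p - (1 / 2 : ℂ) • B (y p) (y p)).im ≤
      (C / 2 - c) * T p := by
    rw [Real.norm_of_nonneg (hT p)] at hbound
    exact (Complex.im_le_norm _).trans hbound
  have hhalf : ((1 / 2 : ℂ) • B (y p) (y p)).im = (B (y p) (y p)).im / 2 := by
    rw [smul_eq_mul, one_div_mul_eq_div, Complex.div_ofNat_im]
  rw [Complex.sub_im, Complex.sub_im, hhalf] at hrem
  linarith [hBy p]

end Holomorphic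

section RealVec

open Filter Topology

theorem continuous_realVec : Continuous (realVec : (Fin d → ℝ) → Fin d → ℂ) := by
  unfold realVec
  fun_prop

theorem realVec_re {z : Fin d → ℂ} (hz : ∀ i, (z i).im = 0) :
    realVec (fun i => (z i).re) = z :=
  funext fun i => Complex.ext rfl (hz i).symm

theorem tendsto_re_of_tendsto_realVec {ι : Type*} {l : Filter ι} {f : ι → Fin d → ℂ}
    {w : Fin d → ℝ} (hf : Tendsto f l (𝓝 (realVec w))) :
    Tendsto (fun a i => (f a i).re) l (𝓝 w) :=
  have hre : Continuous fun (z : Fin d → ℂ) i => (z i).re := by fun_prop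
  (hre.tendsto (realVec w)).comp hf

theorem tendsto_sum_im_sq_of_tendsto_realVec {ι : Type*} {l : Filter ι} {f : ι → Fin d → ℂ}
    {w : Fin d → ℝ} (hf : Tendsto f l (𝓝 (realVec w))) :
    Tendsto (fun a => ∑ i, (f a i).im ^ 2) l (𝓝 0) :=
  have him : Continuous fun z : Fin d → ℂ => ∑ i, (z i).im ^ 2 := by fun_prop
  (him.tendsto' (realVec w) 0 (by simp [realVec])).comp hf

theorem norm_realVec_add_I_smul_realVec_sq_le (s v : Fin d → ℝ) :
    ‖realVec s + Complex.I • realVec v‖ ^ 2 ≤ ∑ i, s i ^ 2 + ∑ i, v i ^ 2 := by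
  rw [← Finset.sum_add_distrib, ← Real.le_sqrt (norm_nonneg _) (by positivity),
    pi_norm_le_iff_of_nonneg (Real.sqrt_nonneg _)]
  intro i
  have hcoord : ‖(realVec s + Complex.I • realVec v) i‖ ^ 2 = s i ^ 2 + v i ^ 2 := by
    rw [Complex.sq_norm, Complex.normSq_apply]
    simp [realVec, sq]
  rw [Real.le_sqrt (norm_nonneg _) (by positivity), hcoord]
  exact Finset.single_le_sum (f := fun i => s i ^ 2 + v i ^ 2) (fun i _ => by positivity)
    (Finset.mem_univ i)

theorem realVec_smul_add_I_smul_realVec_smul (t : ℝ) (s v : Fin d → ℝ) :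
    realVec (t • s) + Complex.I • realVec (t • v) =
      (t : ℂ) • (realVec s + Complex.I • realVec v) := by
  ext i
  simp only [realVec, Pi.add_apply, Pi.smul_apply, smul_eq_mul, Complex.ofReal_mul]
  ring

theorem im_apply_ofReal_smul_ofReal_smul {E : Type*} [NormedAddCommGroup E] [NormedSpace ℂ E]
    (B : E →L[ℂ] E →L[ℂ] ℂ) (t : ℝ) (h : E) :
    (B ((t : ℂ) • h) ((t : ℂ) • h)).im = t ^ 2 * (B h h).im := by
  simp only [map_smul, smul_apply, smul_eq_mul, Complex.im_ofReal_mul]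
  ring

theorem exists_le_neg_im_of_forall_unit {B : (Fin d → ℂ) →L[ℂ] (Fin d → ℂ) →L[ℂ] ℂ} {C : ℝ}
    (hB : ∀ ω : Fin d → ℝ, ∑ i, ω i ^ 2 = 1 → ∃ s : Fin d → ℝ, ∑ i, s i ^ 2 ≤ 1 ∧
      C ≤ -(B (realVec s + Complex.I • realVec ω) (realVec s + Complex.I • realVec ω)).im)
    (v : Fin d → ℝ) :
    ∃ s : Fin d → ℝ, ∑ i, s i ^ 2 ≤ ∑ i, v i ^ 2 ∧ C * ∑ i, v i ^ 2 ≤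
      -(B (realVec s + Complex.I • realVec v) (realVec s + Complex.I • realVec v)).im := by
  have sum_smul_sq (t : ℝ) (u : Fin d → ℝ) : ∑ i, (t • u) i ^ 2 = t ^ 2 * ∑ i, u i ^ 2 := by
    simp only [Pi.smul_apply, smul_eq_mul, mul_pow, Finset.mul_sum]
  have hnonneg : 0 ≤ ∑ i, v i ^ 2 := Finset.sum_nonneg fun i _ => sq_nonneg _
  obtain rfl | hv := eq_or_ne v 0
  · have hzero : realVec (0 : Fin d → ℝ) = 0 := funext fun _ => Complex.ofReal_zero
    exact ⟨0, le_rfl, by simp [hzero]⟩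
  obtain ⟨t, ω, hω, rfl⟩ : ∃ (t : ℝ) (ω : Fin d → ℝ), ∑ i, ω i ^ 2 = 1 ∧ v = t • ω := by
    have hne : ∑ i, v i ^ 2 ≠ 0 := fun h => hv <| funext fun i => by
      simpa using (Finset.sum_eq_zero_iff_of_nonneg fun i _ => sq_nonneg (v i)).1 h i
    have hsqrt : √(∑ i, v i ^ 2) ≠ 0 := (Real.sqrt_ne_zero hnonneg).2 hne
    refine ⟨√(∑ i, v i ^ 2), (√(∑ i, v i ^ 2))⁻¹ • v, ?_, (smul_inv_smul₀ hsqrt v).symm⟩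
    rw [sum_smul_sq, inv_pow, Real.sq_sqrt hnonneg, inv_mul_cancel₀ hne]
  obtain ⟨s, hs, hsB⟩ := hB ω hω
  refine ⟨t • s, ?_, ?_⟩
  · rw [sum_smul_sq, sum_smul_sq, hω]
    gcongr
  · rw [sum_smul_sq, hω, mul_one, realVec_smul_add_I_smul_realVec_smul,
      im_apply_ofReal_smul_ofReal_smul, ← mul_neg, mul_comm]
    gcongr

theorem exists_add_real_and_le_neg_im {B : (Fin d → ℂ) →L[ℂ] (Fin d → ℂ) →L[ℂ] ℂ} {C : ℝ}
    (hB : ∀ ω : Fin d → ℝ, ∑ i, ω i ^ 2 = 1 → ∃ s : Fin d → ℝ, ∑ i, s i ^ 2 ≤ 1 ∧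
      C ≤ -(B (realVec s + Complex.I • realVec ω) (realVec s + Complex.I • realVec ω)).im)
    (z : Fin d → ℂ) :
    ∃ y : Fin d → ℂ, (∀ i, ((z + y) i).im = 0) ∧ ‖y‖ ^ 2 ≤ 2 * ∑ i, (z i).im ^ 2 ∧
      C * ∑ i, (z i).im ^ 2 ≤ -(B y y).im := by
  obtain ⟨s, hs, hsB⟩ := exists_le_neg_im_of_forall_unit hB fun i => -(z i).im
  have hnorm := norm_realVec_add_I_smul_realVec_sq_le s fun i => -(z i).im
  simp only [neg_sq] at hs hsB hnorm
  exact ⟨_, fun i => by simp [realVec], by linarith, hsB⟩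

theorem differentiableAt_fderiv_of_forall_unit {f : (Fin d → ℂ) → ℂ} {x : Fin d → ℂ} {C : ℝ}
    (hC : 0 < C) (hf : ∀ ω : Fin d → ℝ, ∑ i, ω i ^ 2 = 1 → ∃ h : Fin d → ℂ,
      C ≤ -(fderiv ℂ (fderiv ℂ f) x h h).im) :
    DifferentiableAt ℂ (fderiv ℂ f) x := by
  obtain hd | ⟨⟨j⟩⟩ := isEmpty_or_nonempty (Fin d)
  · exact (hasFDerivAt_of_subsingleton _ _).differentiableAt
  -- `fderiv` is `0` where the derivative does not exist, which the positive bound excludes.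
  by_contra hnot
  obtain ⟨h, hh⟩ := hf (Pi.single j 1) (by simp [Pi.single_apply])
  simp only [fderiv_zero_of_not_differentiableAt hnot, zero_apply, Complex.zero_im, neg_zero] at hh
  exact hC.not_ge hh

end RealVec

section CriticalValue

open Filter Topology Function

theorem im_critical_value_lower_bound_general {P : Type*} [TopologicalSpace P]
    (Φ : (Fin d → ℂ) → P → ℂ) (w₀ : Fin d → ℝ) (p₀ : P)
    (hcont : ∀ᶠ q in 𝓝 (realVec w₀, p₀), ContinuousAt (uncurry Φ) q)
    (hhol : ∀ᶠ q in 𝓝 (realVec w₀, p₀), DifferentiableAt ℂ (fun w => Φ w q.2) q.1)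
    (hIm : ∀ᶠ q in 𝓝 (w₀, p₀), 0 ≤ (Φ (realVec q.1) q.2).im)
    (W : P → Fin d → ℂ) (hW : ContinuousAt W p₀)
    (hcrit : ∀ᶠ p in 𝓝 p₀, fderiv ℂ (fun w => Φ w p) (W p) = 0) (hW₀ : W p₀ = realVec w₀)
    (hsup : ∃ C : ℝ, 0 < C ∧ ∀ ω : Fin d → ℝ, (∑ i, ω i ^ 2) = 1 →
      ∃ s : Fin d → ℝ, (∑ i, s i ^ 2) ≤ 1 ∧
        C ≤ -((iteratedFDeriv ℂ 2 (fun w => Φ w p₀) (realVec w₀))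
            ![realVec s + Complex.I • realVec ω, realVec s + Complex.I • realVec ω]).im) :
    ∃ c : ℝ, 0 < c ∧ ∀ᶠ p in 𝓝 p₀, c * (∑ i, ((W p i).im) ^ 2) ≤ (Φ (W p) p).im := by
  obtain ⟨C, hC, hsup⟩ := hsup
  simp only [iteratedFDeriv_two_apply, Matrix.cons_val_zero, Matrix.cons_val_one] at hsup
  rw [← hW₀] at hcont hhol hsup
  set B := fderiv ℂ (fderiv ℂ fun w => Φ w p₀) (W p₀)
  have hB : HasFDerivAt (fderiv ℂ fun w => Φ w p₀) B (W p₀) :=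
    (differentiableAt_fderiv_of_forall_unit hC fun ω hω =>
      (hsup ω hω).imp' _ fun s hs => hs.2).hasFDerivAt
  choose y hyreal hyT hBy using fun p => exists_add_real_and_le_neg_im hsup (W p)
  have hWlim : Tendsto W (𝓝 p₀) (𝓝 (realVec w₀)) := hW₀ ▸ hW
  have hy : Tendsto y (𝓝 p₀) (𝓝 0) := by
    have hT := (tendsto_sum_im_sq_of_tendsto_realVec hWlim).const_mul 2
    rw [mul_zero] at hT
    have hsq := squeeze_zero (fun p => sq_nonneg ‖y p‖) hyT hT
    exact tendsto_zero_iff_norm_tendsto_zero.2 (by simpa [Real.sqrt_sq] using hsq.sqrt)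
  have hIm' : ∀ᶠ p in 𝓝 p₀, 0 ≤ (Φ (W p + y p) p).im := by
    have hlim := tendsto_re_of_tendsto_realVec (f := fun p => W p + y p) (w := w₀)
      (by simpa using hWlim.add hy)
    filter_upwards [(hlim.prodMk_nhds tendsto_id).eventually hIm] with p hp
    rwa [realVec_re (hyreal p)] at hp
  have hT (p : P) : 0 ≤ ∑ i, (W p i).im ^ 2 := Finset.sum_nonneg fun i _ => sq_nonneg _
  have hyO : (fun p => ‖y p‖ ^ 2) =O[𝓝 p₀] fun p => ∑ i, (W p i).im ^ 2 :=
    .of_bound 2 <| .of_forall fun p => by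
      rw [Real.norm_of_nonneg (sq_nonneg _), Real.norm_of_nonneg (hT p)]
      exact hyT p
  exact ⟨C / 4, by positivity, eventually_mul_le_im_critical_value hcont hhol hW hcrit hB hy hIm'
    hT hyO hBy (by linarith)⟩

end CriticalValue

/-- Lower bound for the imaginary part of the critical value `ψ(x,v) = Φ(z(x,v),
η(x,v); x, v)` of a holomorphic phase `Φ` with `Im Φ ≥ 0` on the real domain:
if the Hessian `∂²Φ` at the critical point satisfies the uniform sup-inequality
`sup_{|s|≤1} −Im((s+iω)·∂²Φ(s+iω)) ≥ C > 0` for all unit `ω` (Hörmander, Lemma 7.7.9),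
then for real parameters `p = (x,v)` near `p̂`,
`Im ψ(p) ≥ c·|Im(z,η)(p)|²` for some `c > 0`. Here `w = (z,η)` is abbreviated to a
single complex variable and `W p` denotes the holomorphic critical point. -/
theorem im_critical_value_lower_bound
    (Φ : (Fin d → ℂ) → (Fin k → ℂ) → ℂ)
    (w₀ : Fin d → ℝ) (p₀ : Fin k → ℝ)
    (U : Set ((Fin d → ℂ) × (Fin k → ℂ))) (hUopen : IsOpen U)
    (hUmem : (realVec w₀, realVec p₀) ∈ U)
    (hhol : DifferentiableOn ℂ (fun q : (Fin d → ℂ) × (Fin k → ℂ) => Φ q.1 q.2) U)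
    (hIm : ∀ (w : Fin d → ℝ) (p : Fin k → ℝ), (realVec w, realVec p) ∈ U →
      0 ≤ (Φ (realVec w) (realVec p)).im)
    (W : (Fin k → ℂ) → (Fin d → ℂ))
    (hW : ∃ V : Set (Fin k → ℂ), IsOpen V ∧ realVec p₀ ∈ V ∧
      DifferentiableOn ℂ W V ∧
      ∀ p ∈ V, fderiv ℂ (fun w => Φ w p) (W p) = 0)
    (hW₀ : W (realVec p₀) = realVec w₀)
    (hsup : ∃ C : ℝ, 0 < C ∧ ∀ ω : Fin d → ℝ, (∑ i, ω i ^ 2) = 1 →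
      ∃ s : Fin d → ℝ, (∑ i, s i ^ 2) ≤ 1 ∧
        C ≤ -((iteratedFDeriv ℂ 2 (fun w => Φ w (realVec p₀)) (realVec w₀))
            ![realVec s + Complex.I • realVec ω,
              realVec s + Complex.I • realVec ω]).im) :
    ∃ c : ℝ, 0 < c ∧ ∃ ε : ℝ, 0 < ε ∧ ∀ p : Fin k → ℝ, dist p p₀ < ε →
      c * (∑ i, ((W (realVec p) i).im) ^ 2) ≤ (Φ (W (realVec p)) (realVec p)).im := by
  obtain ⟨V, hVopen, hp₀V, hWhol, hcrit⟩ := hW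
  have hU := hUopen.mem_nhds hUmem
  have hV := hVopen.mem_nhds hp₀V
  have hreal : Continuous (realVec : (Fin k → ℝ) → Fin k → ℂ) := continuous_realVec
  let incl : (Fin d → ℂ) × (Fin k → ℝ) → (Fin d → ℂ) × (Fin k → ℂ) := Prod.map id realVec
  have hincl : Continuous incl := continuous_id.prodMap hreal
  have hdiff : ∀ᶠ q in nhds (realVec w₀, p₀),
      DifferentiableAt ℂ (fun q : (Fin d → ℂ) × (Fin k → ℂ) => Φ q.1 q.2) (incl q) :=
    hincl.continuousAt.eventually (hhol.eventually_differentiableAt hU)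
  obtain ⟨c, hc, hbound⟩ := im_critical_value_lower_bound_general
    (fun w p => Φ w (realVec p)) w₀ p₀
    (hdiff.mono fun q hq => hq.continuousAt.comp hincl.continuousAt)
    (hdiff.mono fun q hq => hq.comp (f := fun w => (w, realVec q.2)) q.1 (by fun_prop))
    (((continuous_realVec.prodMap hreal).continuousAt.eventually_mem hU).mono fun q => hIm q.1 q.2)
    (fun p => W (realVec p)) ((hWhol.continuousOn.continuousAt hV).comp hreal.continuousAt)
    ((hreal.continuousAt.eventually_mem hV).mono fun p => hcrit (realVec p)) hW₀ hsup
  exact ⟨c, hc, Metric.eventually_nhds_iff.1 hbound⟩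
end
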